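/- In the online Ramsey game with targets red C₄ and blue P₆, consider the position in which the five edges v₁v₂, v₂v₃, v₃v₄, v₄v₅, v₅v₆ of a path on six distinct vertices have been colored red, red, blue, red, blue respectively (case R6). From this position Builder can force a red copy of C₄ or a blue copy of P₆ within at most 6 additional rounds, so within at most 11 rounds in total. -/

import Mathlib

open SimpleGraph

/-- The set `S` of edges of the infinite complete graph on `ℕ` contains a copy of
the graph `G`: there is an injective map of the vertices of `G` into `ℕ` sending
every edge of `G` into `S`. -/
def HasCopy {V : Type*} (G : SimpleGraph V) (S : Set (Sym2 ℕ)) : Prop :=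
  ∃ f : V → ℕ, Function.Injective f ∧ ∀ a b, G.Adj a b → s(f a, f b) ∈ S

/-- `BuilderWinsIn G H R B r` means: in the online Ramsey game with targets a red copy
of `G` and a blue copy of `H`, from the position in which the edges in `R` have been
colored red and the edges in `B` have been colored blue, Builder has a strategy that
guarantees, against every Painter strategy, that within at most `r` further rounds the
colored edges contain a red copy of `G` or a blue copy of `H`.  (In each round Builder
chooses a previously unchosen non-loop edge of the infinite complete graph on `ℕ`, and
Painter immediately colors it red or blue; so Builder wins within `r + 1` rounds iff he
has already won, or he can choose an edge such that whichever color Painter gives it,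
he can win within `r` further rounds.) -/
def BuilderWinsIn {V W : Type*} (G : SimpleGraph V) (H : SimpleGraph W) :
    Set (Sym2 ℕ) → Set (Sym2 ℕ) → ℕ → Prop
  | R, B, 0 => HasCopy G R ∨ HasCopy H B
  | R, B, (r + 1) => HasCopy G R ∨ HasCopy H B ∨
      ∃ e : Sym2 ℕ, ¬ e.IsDiag ∧ e ∉ R ∧ e ∉ B ∧
        BuilderWinsIn G H (insert e R) B r ∧ BuilderWinsIn G H R (insert e B) r

/-- The online size Ramsey number `ř(G, H)`: the least `t` such that, starting from the
empty position, Builder can force a red copy of `G` or a blue copy of `H` within at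
most `t` rounds. -/
noncomputable def onlineRamsey {V W : Type*} (G : SimpleGraph V) (H : SimpleGraph W) : ℕ :=
  sInf {t | BuilderWinsIn G H ∅ ∅ t}

/-- A Builder strategy on seven vertices: either choose an edge (and continue according to
whether it was colored red or blue), or exhibit a red `C₄` or a blue `P₆`. -/
inductive Strat : Type
  | red (a b c d : Fin 7)
  | blue (a b c d e f : Fin 7)
  | move (a b : Fin 7) (onRed onBlue : Strat)

/-- Edge membership, for edges given as a list of ordered pairs. -/
def MemE (L : List (Fin 7 × Fin 7)) (a b : Fin 7) : Bool :=
  decide ((a, b) ∈ L) || decide ((b, a) ∈ L)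

/-- Verification that a strategy wins within `r` rounds. -/
def Strat.check : Strat → List (Fin 7 × Fin 7) → List (Fin 7 × Fin 7) → ℕ → Bool
  | .red a b c d, R, _, _ => decide ([a, b, c, d].Nodup) &&
      (MemE R a b && MemE R b c && MemE R c d && MemE R d a)
  | .blue a b c d e f, _, B, _ => decide ([a, b, c, d, e, f].Nodup) &&
      (MemE B a b && MemE B b c && MemE B c d && MemE B d e && MemE B e f)
  | .move _ _ _ _, _, _, 0 => false
  | .move a b x y, R, B, r + 1 => decide (a ≠ b) && !MemE R a b && !MemE B a b &&
      x.check ((a, b) :: R) B r && y.check R ((a, b) :: B) r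

/-- The set of edges on `ℕ` obtained from a list of pairs through a labelling `w`. -/
def toEdges (w : Fin 7 → ℕ) (L : List (Fin 7 × Fin 7)) : Set (Sym2 ℕ) :=
  {e | ∃ p ∈ L, e = s(w p.1, w p.2)}

theorem toEdges_cons (w : Fin 7 → ℕ) (p : Fin 7 × Fin 7) (L : List (Fin 7 × Fin 7)) :
    toEdges w (p :: L) = insert s(w p.1, w p.2) (toEdges w L) := by
  ext e
  simp [toEdges]

theorem mem_toEdges {w : Fin 7 → ℕ} (hw : Function.Injective w) (L : List (Fin 7 × Fin 7))
    (a b : Fin 7) : s(w a, w b) ∈ toEdges w L ↔ MemE L a b = true := by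
  simp only [toEdges, MemE, Set.mem_ofPred_eq, Sym2.eq_iff, hw.eq_iff, Bool.or_eq_true,
    decide_eq_true_eq]
  constructor
  · rintro ⟨⟨x, y⟩, hp, h | h⟩
    · obtain ⟨rfl, rfl⟩ := h
      exact Or.inl hp
    · obtain ⟨rfl, rfl⟩ := h
      exact Or.inr hp
  · rintro (h | h)
    · exact ⟨_, h, Or.inl ⟨rfl, rfl⟩⟩
    · exact ⟨_, h, Or.inr ⟨rfl, rfl⟩⟩

theorem memE_comm (L : List (Fin 7 × Fin 7)) (a b : Fin 7) : MemE L a b = MemE L b a := by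
  simp [MemE, Bool.or_comm]

theorem hasCopy_red {w : Fin 7 → ℕ} (hw : Function.Injective w) {L : List (Fin 7 × Fin 7)}
    {a b c d : Fin 7} (hn : [a, b, c, d].Nodup) (h1 : MemE L a b = true)
    (h2 : MemE L b c = true) (h3 : MemE L c d = true) (h4 : MemE L d a = true) :
    HasCopy (cycleGraph 4) (toEdges w L) := by
  refine ⟨fun i => w ([a, b, c, d].get i), hw.comp (List.nodup_iff_injective_get.1 hn), ?_⟩
  intro i j hij
  rw [mem_toEdges hw]
  rw [cycleGraph_adj] at hij
  have h1' := memE_comm L a b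
  have h2' := memE_comm L b c
  have h3' := memE_comm L c d
  have h4' := memE_comm L d a
  fin_cases i <;> fin_cases j <;> first
    | (exfalso; revert hij; decide)
    | simp_all

theorem hasCopy_blue {w : Fin 7 → ℕ} (hw : Function.Injective w) {L : List (Fin 7 × Fin 7)}
    {a b c d e f : Fin 7} (hn : [a, b, c, d, e, f].Nodup) (h1 : MemE L a b = true)
    (h2 : MemE L b c = true) (h3 : MemE L c d = true) (h4 : MemE L d e = true)
    (h5 : MemE L e f = true) :
    HasCopy (pathGraph 6) (toEdges w L) := by
  refine ⟨fun i => w ([a, b, c, d, e, f].get i),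
    hw.comp (List.nodup_iff_injective_get.1 hn), ?_⟩
  intro i j hij
  rw [mem_toEdges hw]
  rw [pathGraph_adj] at hij
  have h1' := memE_comm L a b
  have h2' := memE_comm L b c
  have h3' := memE_comm L c d
  have h4' := memE_comm L d e
  have h5' := memE_comm L e f
  fin_cases i <;> fin_cases j <;> first
    | (exfalso; revert hij; decide)
    | simp_all

theorem builderWinsIn_of_hasCopy {V W : Type*} {G : SimpleGraph V} {H : SimpleGraph W}
    {R B : Set (Sym2 ℕ)} (r : ℕ) (h : HasCopy G R ∨ HasCopy H B) :
    BuilderWinsIn G H R B r := by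
  cases r with
  | zero => exact h
  | succ r => exact h.elim Or.inl fun h => Or.inr (Or.inl h)

theorem Strat.sound {w : Fin 7 → ℕ} (hw : Function.Injective w) (t : Strat) :
    ∀ (R B : List (Fin 7 × Fin 7)) (r : ℕ), t.check R B r = true →
      BuilderWinsIn (cycleGraph 4) (pathGraph 6) (toEdges w R) (toEdges w B) r := by
  induction t with
  | red a b c d =>
    intro R B r h
    simp only [Strat.check, Bool.and_eq_true, decide_eq_true_eq] at h
    obtain ⟨hn, ⟨⟨h1, h2⟩, h3⟩, h4⟩ := h
    exact builderWinsIn_of_hasCopy r (Or.inl (hasCopy_red hw hn h1 h2 h3 h4))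
  | blue a b c d e f =>
    intro R B r h
    simp only [Strat.check, Bool.and_eq_true, decide_eq_true_eq] at h
    obtain ⟨hn, ⟨⟨⟨h1, h2⟩, h3⟩, h4⟩, h5⟩ := h
    exact builderWinsIn_of_hasCopy r (Or.inr (hasCopy_blue hw hn h1 h2 h3 h4 h5))
  | move a b x y ihx ihy =>
    intro R B r h
    cases r with
    | zero => simp [Strat.check] at h
    | succ r =>
      simp only [Strat.check, Bool.and_eq_true, decide_eq_true_eq, Bool.not_eq_true'] at h
      obtain ⟨⟨⟨⟨hab, hR⟩, hB⟩, hx⟩, hy⟩ := h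
      refine Or.inr (Or.inr ⟨s(w a, w b), ?_, ?_, ?_, ?_, ?_⟩)
      · simpa using fun h => hab (hw h)
      · rw [mem_toEdges hw, hR]
        simp
      · rw [mem_toEdges hw, hB]
        simp
      · have := ihx _ _ _ hx
        rwa [toEdges_cons] at this
      · have := ihy _ _ _ hy
        rwa [toEdges_cons] at this

/-- Builder's strategy from position `R6`; vertex `6` is a fresh vertex. -/
def stratR6 : Strat :=
  (.move 0 2
   (.move 0 3
    (.move 1 3 (.red 0 3 1 2)
     (.move 1 4 (.red 0 3 4 1)
      (.move 1 6
       (.move 2 6 (.red 0 2 6 1) (.blue 5 4 1 3 2 6))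
       (.move 2 4 (.red 0 3 4 2) (.blue 5 4 2 3 1 6)))))
    (.move 0 4
     (.move 1 4 (.red 0 4 1 2)
      (.move 0 5
       (.move 2 5 (.red 0 5 2 1) (.blue 0 3 2 5 4 1)) (.blue 1 4 5 0 3 2)))
     (.move 1 3
      (.move 0 6
       (.move 2 6 (.red 0 6 2 1) (.blue 5 4 0 3 2 6))
       (.move 2 4 (.red 1 3 4 2) (.blue 5 4 2 3 0 6)))
      (.move 1 5
       (.move 2 5 (.red 0 2 5 1) (.blue 0 4 5 2 3 1)) (.blue 0 4 5 1 3 2)))))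
   (.move 0 3
    (.move 1 3
     (.move 0 4 (.red 0 4 3 1)
      (.move 0 5
       (.move 1 5 (.red 0 5 1 3) (.blue 1 5 4 0 2 3))
       (.move 1 4 (.red 0 3 4 1) (.blue 1 4 5 0 2 3))))
     (.move 0 4
      (.move 1 4 (.red 0 3 4 1) (.blue 0 2 3 1 4 5)) (.blue 1 3 2 0 4 5)))
    (.move 1 3
     (.move 0 4 (.red 0 4 3 1)
      (.move 0 6
       (.move 2 6 (.red 0 6 2 1) (.blue 5 4 0 3 2 6))
       (.move 2 4 (.red 1 3 4 2) (.blue 5 4 2 3 0 6))))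
     (.move 0 4
      (.move 1 4
       (.move 2 4 (.red 0 4 2 1) (.blue 1 3 0 2 4 5)) (.blue 0 2 3 1 4 5)) (.blue 1 3 2 0 4 5)))))

theorem stratR6_check :
    stratR6.check [(0, 1), (1, 2), (3, 4)] [(2, 3), (4, 5)] 6 = true := by
  rfl

/-- Case `R6`: in the online Ramsey game with targets red `C₄` and blue `P₆`,
from the position in which the five edges `v₁v₂, v₂v₃, v₃v₄, v₄v₅, v₅v₆` of a path on
six distinct vertices have been colored red, red, blue, red, blue respectively,
Builder can force a red copy of `C₄` or a blue copy of `P₆` within at most 6 additional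
rounds (so within at most 11 rounds in total). -/
theorem builder_wins_case_R6 (v : Fin 6 → ℕ) (hv : Function.Injective v) :
    BuilderWinsIn (cycleGraph 4) (pathGraph 6)
      {s(v 0, v 1), s(v 1, v 2), s(v 3, v 4)}
      {s(v 2, v 3), s(v 4, v 5)} 6 := by
  obtain ⟨z, hz⟩ := (Set.finite_range v).exists_notMem
  have hw : Function.Injective (Fin.snoc v z : Fin 7 → ℕ) :=
    Fin.snoc_injective_iff.2 ⟨hv, hz⟩
  have key := stratR6.sound hw _ _ _ stratR6_check
  have e0 : (Fin.snoc v z : Fin 7 → ℕ) 0 = v 0 := rfl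
  have e1 : (Fin.snoc v z : Fin 7 → ℕ) 1 = v 1 := rfl
  have e2 : (Fin.snoc v z : Fin 7 → ℕ) 2 = v 2 := rfl
  have e3 : (Fin.snoc v z : Fin 7 → ℕ) 3 = v 3 := rfl
  have e4 : (Fin.snoc v z : Fin 7 → ℕ) 4 = v 4 := rfl
  have e5 : (Fin.snoc v z : Fin 7 → ℕ) 5 = v 5 := rfl
  have hnil : toEdges (Fin.snoc v z : Fin 7 → ℕ) [] = ∅ := by
    ext e
    simp [toEdges]
  simp only [toEdges_cons, hnil, e0, e1, e2, e3, e4, e5, insert_empty_eq] at key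
  exact key
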